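/- arXiv:1506.08927 — 2 statements merged into one kernel-verified Lean document; each statement's English description precedes it below -/
import Mathlib

section
/- Assume 0 ≤ i < k < j ≤ n. Then Hom(X_{i,k}, X_{i,j}) ≠ 0 if and only if ε_k = −; Hom(X_{i,j}, X_{i,k}) ≠ 0 if and only if ε_k = +; and Ext^1(X_{i,k}, X_{i,j}) = 0 and Ext^1(X_{i,j}, X_{i,k}) = 0. -/
namespace ESPaper

/-- Source of arrow `a m` (between vertices `m` and `m+1`): `m` if `ε m = +` (true). -/
def asrc (ε : ℕ → Bool) (m : ℕ) : ℕ := if ε m then m else m + 1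

/-- Target of arrow `a m`. -/
def atgt (ε : ℕ → Bool) (m : ℕ) : ℕ := if ε m then m + 1 else m

/-- A representation of the type `A_n` quiver `Q_ε`: finite dimensional vector spaces at the
vertices `1, …, n` (the spaces at the remaining indices are required to be trivial, so that
the maps attached to indices outside `1, …, n-1` carry no information) together with a
linear map along each arrow `a m : asrc ε m → atgt ε m`, `1 ≤ m ≤ n-1`. -/
structure Rep (K : Type) [Field K] (n : ℕ) (ε : ℕ → Bool) : Type 1 where
  V : ℕ → Type
  [instAdd : ∀ m, AddCommGroup (V m)]
  [instMod : ∀ m, Module K (V m)]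
  [instFin : ∀ m, FiniteDimensional K (V m)]
  triv : ∀ m, m = 0 ∨ n < m → Subsingleton (V m)
  φ : ∀ m, V (asrc ε m) →ₗ[K] V (atgt ε m)

attribute [instance] Rep.instAdd Rep.instMod Rep.instFin

/-- A morphism of representations of `Q_ε`. -/
structure RepHom {K : Type} [Field K] {n : ℕ} {ε : ℕ → Bool} (A B : Rep K n ε) where
  app : ∀ m, A.V m →ₗ[K] B.V m
  comm : ∀ m, (app (atgt ε m)).comp (A.φ m) = (B.φ m).comp (app (asrc ε m))

/-- Vertex space of the indecomposable `X_{i,j}` (for `0 ≤ i < j ≤ n`): `K` at the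
vertices `i+1, …, j` and `0` elsewhere. -/
def XV (K : Type) [Field K] (n i j m : ℕ) : Submodule K K :=
  if i + 1 ≤ m ∧ m ≤ j ∧ m ≤ n then ⊤ else ⊥

/-- Arrow map of the indecomposable `X_{i,j}`: the identity whenever both endpoints of the
arrow lie in the support, and zero otherwise. -/
def Xφ (K : Type) [Field K] (n : ℕ) (ε : ℕ → Bool) (i j m : ℕ) :
    XV K n i j (asrc ε m) →ₗ[K] XV K n i j (atgt ε m) :=
  if h : i + 1 ≤ atgt ε m ∧ atgt ε m ≤ j ∧ atgt ε m ≤ n then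
    LinearMap.codRestrict _ (XV K n i j (asrc ε m)).subtype
      (fun x => by simp [XV, h.1, h.2.1, h.2.2])
  else 0

/-- The indecomposable representation `X_{i,j}` of `Q_ε`. -/
def Xrep (K : Type) [Field K] (n : ℕ) (ε : ℕ → Bool) (i j : ℕ) : Rep K n ε where
  V m := XV K n i j m
  instAdd _ := inferInstance
  instMod _ := inferInstance
  instFin _ := inferInstance
  triv m hm := by
    have hneg : ¬ (i + 1 ≤ m ∧ m ≤ j ∧ m ≤ n) := by omega
    have hbot : XV K n i j m = ⊥ := by unfold XV; rw [if_neg hneg]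
    show Subsingleton (XV K n i j m)
    rw [hbot]
    infer_instance
  φ m := Xφ K n ε i j m

variable {K : Type} [Field K]

/-- `Hom(A, B) = 0`. -/
def homZero {n : ℕ} {ε : ℕ → Bool} (A B : Rep K n ε) : Prop :=
  ∀ θ : RepHom A B, ∀ m, θ.app m = 0

/-- `Hom(A, B) ≠ 0`. -/
def homNonzero {n : ℕ} {ε : ℕ → Bool} (A B : Rep K n ε) : Prop :=
  ∃ θ : RepHom A B, ∃ m, θ.app m ≠ 0

/-- `0 → B → E → A → 0` is a short exact sequence. -/
def IsSES {n : ℕ} {ε : ℕ → Bool} {B E A : Rep K n ε}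
    (f : RepHom B E) (g : RepHom E A) : Prop :=
  (∀ m, Function.Injective (f.app m)) ∧ (∀ m, Function.Surjective (g.app m)) ∧
    (∀ m, LinearMap.range (f.app m) = LinearMap.ker (g.app m))

/-- The short exact sequence `0 → B → E → A → 0` splits. -/
def Splits {n : ℕ} {ε : ℕ → Bool} {E A : Rep K n ε} (g : RepHom E A) : Prop :=
  ∃ s : RepHom A E, ∀ m, (g.app m).comp (s.app m) = LinearMap.id

/-- `Ext¹(A, B) ≠ 0`: there is a nonsplit short exact sequence `0 → B → E → A → 0`. -/
def extNonzero {n : ℕ} {ε : ℕ → Bool} (A B : Rep K n ε) : Prop :=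
  ∃ (E : Rep K n ε) (f : RepHom B E) (g : RepHom E A), IsSES f g ∧ ¬ Splits g

/-- `Ext¹(A, B) = 0`. -/
def extZero {n : ℕ} {ε : ℕ → Bool} (A B : Rep K n ε) : Prop := ¬ extNonzero A B

/-- `(U, V)` is an exceptional pair: `Hom(V,U) = 0` and `Ext¹(V,U) = 0`. -/
def ExcPair {n : ℕ} {ε : ℕ → Bool} (U V : Rep K n ε) : Prop := homZero V U ∧ extZero V U

theorem extZero_of_solve {n : ℕ} {ε : ℕ → Bool} (A B : Rep K n ε)
    (H : ∀ d : ∀ m, A.V (asrc ε m) →ₗ[K] B.V (atgt ε m),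
      ∃ c : ∀ m, A.V m →ₗ[K] B.V m,
        ∀ m x, B.φ m (c _ x) - c _ (A.φ m x) = d m x) : extZero A B := by
  rintro ⟨E, f, g, ⟨hf, hg, hfg⟩, hns⟩
  apply hns
  choose σ hσ using fun m => (g.app m).exists_rightInverse_of_surjective
    (LinearMap.range_eq_top.2 (hg m))
  choose r hr using fun m => (f.app m).exists_leftInverse_of_injective
    (LinearMap.ker_eq_bot.2 (hf m))
  have hσ' : ∀ m x, g.app m (σ m x) = x := fun m x => LinearMap.congr_fun (hσ m) x
  have hr' : ∀ m x, r m (f.app m x) = x := fun m x => LinearMap.congr_fun (hr m) x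
  have hgc : ∀ m x, g.app _ (E.φ m x) = A.φ m (g.app _ x) :=
    fun m x => LinearMap.congr_fun (g.comm m) x
  have hfc : ∀ m x, f.app _ (B.φ m x) = E.φ m (f.app _ x) :=
    fun m x => LinearMap.congr_fun (f.comm m) x
  obtain ⟨c, hc⟩ := H (fun m => (r _).comp ((E.φ m).comp (σ _) - (σ _).comp (A.φ m)))
  have key : ∀ m x, f.app _ (r _ (E.φ m (σ _ x) - σ _ (A.φ m x))) =
      E.φ m (σ _ x) - σ _ (A.φ m x) := by
    intro m x
    have : E.φ m (σ _ x) - σ _ (A.φ m x) ∈ LinearMap.range (f.app (atgt ε m)) := by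
      rw [hfg, LinearMap.mem_ker, map_sub, hgc, hσ', hσ', sub_self]
    obtain ⟨b, hb⟩ := this
    rw [← hb, hr']
  have gf : ∀ m x, g.app m (f.app m x) = 0 := by
    intro m x
    rw [← LinearMap.mem_ker, ← hfg]
    exact ⟨x, rfl⟩
  refine ⟨⟨fun m => σ m - (f.app m).comp (c m), ?_⟩, ?_⟩
  · intro m
    ext x
    have h := congrArg (f.app _) (hc m x)
    simp only [LinearMap.comp_apply, LinearMap.sub_apply] at h
    rw [key, map_sub, hfc] at h
    simp only [LinearMap.comp_apply, LinearMap.sub_apply, map_sub]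
    rw [sub_eq_sub_iff_add_eq_add] at h
    rw [sub_eq_sub_iff_add_eq_add, add_comm, add_comm (E.φ m _)]
    first
      | exact h
      | exact h.symm
      | (rw [add_comm]; exact h)
  · intro m
    ext x
    simp [hσ', gf]

theorem XV_mem (n i j m : ℕ) (h : i + 1 ≤ m ∧ m ≤ j ∧ m ≤ n) (x : K) : x ∈ XV K n i j m := by
  simp [XV, h]

theorem XV_zero (n i j m : ℕ) (h : ¬ (i + 1 ≤ m ∧ m ≤ j ∧ m ≤ n)) (x : XV K n i j m) :
    (x : K) = 0 := by
  have hx : XV K n i j m = ⊥ := if_neg h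
  have h2 : (x : K) ∈ (⊥ : Submodule K K) := hx ▸ x.2
  simpa using h2

theorem Xφ_coe (n : ℕ) (ε : ℕ → Bool) (i j m : ℕ) (x : XV K n i j (asrc ε m)) :
    (Xφ K n ε i j m x : K) =
      if i + 1 ≤ atgt ε m ∧ atgt ε m ≤ j ∧ atgt ε m ≤ n then (x : K) else 0 := by
  by_cases h : i + 1 ≤ atgt ε m ∧ atgt ε m ≤ j ∧ atgt ε m ≤ n
  · rw [if_pos h, Xφ, dif_pos h]
    rfl
  · rw [if_neg h]
    exact XV_zero n i j _ h _

theorem scalar_of (n i p q a b : ℕ) (L : XV K n i p a →ₗ[K] XV K n i q b) :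
    ∃ t : K, ∀ x, (L x : K) = t * x := by
  by_cases h : i + 1 ≤ a ∧ a ≤ p ∧ a ≤ n
  · refine ⟨L ⟨1, XV_mem n i p a h 1⟩, fun x => ?_⟩
    have : x = (x : K) • (⟨1, XV_mem n i p a h 1⟩ : XV K n i p a) := by
      ext; simp
    conv_lhs => rw [this, map_smul]
    simp [mul_comm]
  · refine ⟨0, fun x => ?_⟩
    have : x = 0 := Subtype.ext (XV_zero n i p a h x)
    simp [this]

def cmap (n i p q m : ℕ) (c : K) : XV K n i p m →ₗ[K] XV K n i q m :=
  if h : i + 1 ≤ m ∧ m ≤ q ∧ m ≤ n then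
    LinearMap.codRestrict _ (c • (XV K n i p m).subtype) (fun x => XV_mem n i q m h _)
  else 0

theorem cmap_coe (n i p q m : ℕ) (c : K) (x : XV K n i p m) :
    (cmap n i p q m c x : K) = if i + 1 ≤ m ∧ m ≤ q ∧ m ≤ n then c * x else 0 := by
  unfold cmap
  split_ifs <;> simp

theorem X_solve (n : ℕ) (ε : ℕ → Bool) (i p q k : ℕ) (hp : k ≤ p) (hq : k ≤ q)
    (hpq : p = k ∨ q = k)
    (d : ∀ m, XV K n i p (asrc ε m) →ₗ[K] XV K n i q (atgt ε m)) :
    ∃ c : ∀ m, XV K n i p m →ₗ[K] XV K n i q m,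
      ∀ m x, Xφ K n ε i q m (c _ x) - c _ (Xφ K n ε i p m x) = d m x := by
  choose δ hδ using fun m => scalar_of n i p q _ _ (d m)
  let γ : ℕ → K := fun m => ∑ l ∈ Finset.Ico m (k + 1), (if ε l then δ l else - δ l)
  have γ0 : ∀ m, k < m → γ m = 0 := by
    intro m hm
    simp only [γ]
    rw [Finset.Ico_eq_empty (by omega), Finset.sum_empty]
  have γs : ∀ m, m ≤ k → γ m = (if ε m then δ m else - δ m) + γ (m + 1) := by
    intro m hm
    simp only [γ]
    rw [Finset.sum_eq_sum_Ico_succ_bot (by omega)]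
  refine ⟨fun m => cmap n i p q m (γ m), fun m x => ?_⟩
  apply Subtype.ext
  by_cases hs : i + 1 ≤ asrc ε m ∧ asrc ε m ≤ p ∧ asrc ε m ≤ n
  swap
  · have : x = 0 := Subtype.ext (XV_zero n i p _ hs x)
    subst this
    simp
  by_cases ht : i + 1 ≤ atgt ε m ∧ atgt ε m ≤ q ∧ atgt ε m ≤ n
  swap
  · rw [XV_zero n i q _ ht, XV_zero n i q _ ht]
  refine Eq.trans ?_ (hδ m x).symm
  refine Eq.trans (AddSubgroupClass.coe_sub _ _) ?_
  have e1 : ((Xφ K n ε i q m (cmap n i p q _ (γ (asrc ε m)) x) : XV K n i q _) : K) = γ (asrc ε m) * x := by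
    rw [Xφ_coe, cmap_coe, if_pos ht]
    split_ifs with h
    · rfl
    · rw [γ0 _ (by omega), zero_mul]
  have e2 : ((cmap n i p q _ (γ (atgt ε m)) (Xφ K n ε i p m x) : XV K n i q _) : K) = γ (atgt ε m) * x := by
    rw [cmap_coe, Xφ_coe, if_pos ht]
    split_ifs with h
    · rfl
    · rw [γ0 _ (by omega), zero_mul, zero_mul]
  refine (congrArg₂ (· - ·) e1 e2).trans ?_
  have hm : m ≤ k := by
    unfold asrc atgt at *
    split_ifs at hs ht <;> omega
  have := γs m hm
  cases h : ε m <;> simp only [asrc, atgt, h] at * <;> simp at * <;> rw [this] <;> ring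

theorem X_ext (n : ℕ) (ε : ℕ → Bool) (i p q k : ℕ) (hp : k ≤ p) (hq : k ≤ q)
    (hpq : p = k ∨ q = k) :
    extZero (Xrep K n ε i p) (Xrep K n ε i q) :=
  extZero_of_solve _ _ (X_solve n ε i p q k hp hq hpq)

theorem X_hom0 (n : ℕ) (ε : ℕ → Bool) (i p q k : ℕ) (hi : i < k) (hkn : k < n)
    (hp : k ≤ p) (hq : k ≤ q) (hpq : p = k ∨ q = k) (hpq' : p ≠ q)
    (θ : ∀ m, XV K n i p m →ₗ[K] XV K n i q m)
    (hθ : ∀ m x, θ _ (Xφ K n ε i p m x) = Xφ K n ε i q m (θ _ x))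
    (hc : asrc ε k ≤ p ∧ atgt ε k ≤ q) (m₀ : ℕ) (x : XV K n i p m₀) : θ m₀ x = 0 := by
  choose t ht using fun m => scalar_of n i p q _ _ (θ m)
  have hcomm : ∀ m (x : XV K n i p (asrc ε m)),
      t (atgt ε m) * (Xφ K n ε i p m x : K) = (Xφ K n ε i q m (θ _ x) : K) := by
    intro m x
    rw [← ht]
    exact congrArg Subtype.val (hθ m x)
  have hrel : ∀ m, i + 1 ≤ m → m < k → t m = t (m + 1) := by
    intro m h1 h2
    have hs : i + 1 ≤ asrc ε m ∧ asrc ε m ≤ p ∧ asrc ε m ≤ n := by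
      unfold asrc; split_ifs <;> omega
    have h := hcomm m ⟨1, XV_mem _ _ _ _ hs 1⟩
    rw [Xφ_coe, Xφ_coe, ht, if_pos (by unfold atgt; split_ifs <;> omega),
      if_pos (by unfold atgt; split_ifs <;> omega)] at h
    cases he : ε m <;> simp [asrc, atgt, he] at h <;> simp [h]
  have hk : t k = 0 := by
    have hs : i + 1 ≤ asrc ε k ∧ asrc ε k ≤ p ∧ asrc ε k ≤ n := by
      refine ⟨?_, hc.1, ?_⟩ <;> unfold asrc <;> split_ifs <;> omega
    have htt : i + 1 ≤ atgt ε k ∧ atgt ε k ≤ q ∧ atgt ε k ≤ n := by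
      refine ⟨?_, hc.2, ?_⟩ <;> unfold atgt <;> split_ifs <;> omega
    have h := hcomm k ⟨1, XV_mem _ _ _ _ hs 1⟩
    rw [Xφ_coe, Xφ_coe, if_pos htt] at h
    cases he : ε k
    · have a1 : asrc ε k = k + 1 := by simp [asrc, he]
      have a2 : atgt ε k = k := by simp [atgt, he]
      rw [XV_zero n i q (asrc ε k) (by omega), if_pos (by omega), a2] at h
      simpa using h
    · have a1 : asrc ε k = k := by simp [asrc, he]
      have a2 : atgt ε k = k + 1 := by simp [atgt, he]
      rw [if_neg (by omega), ht] at h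
      rw [← a1]
      simpa using h.symm
  have hall : ∀ d m, i + 1 ≤ m → m + d = k → t m = 0 := by
    intro d
    induction d with
    | zero => intro m _ h; rw [← hk, ← h]; rfl
    | succ d ih => intro m h1 h; rw [hrel m h1 (by omega)]; exact ih _ (by omega) (by omega)
  apply Subtype.ext
  show _ = (0 : K)
  by_cases h1 : i + 1 ≤ m₀ ∧ m₀ ≤ p ∧ m₀ ≤ n
  · by_cases h2 : i + 1 ≤ m₀ ∧ m₀ ≤ q ∧ m₀ ≤ n
    · rw [ht, hall (k - m₀) m₀ (by omega) (by omega), zero_mul]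
    · exact XV_zero n i q _ h2 _
  · rw [ht, XV_zero n i p _ h1 x, mul_zero]

theorem X_hom1 (n : ℕ) (ε : ℕ → Bool) (i p q k : ℕ)
    (hp : k ≤ p) (hq : k ≤ q) (hpq : p = k ∨ q = k)
    (hc : ¬ (asrc ε k ≤ p ∧ atgt ε k ≤ q)) (m : ℕ) (x : XV K n i p (asrc ε m)) :
    cmap n i p q _ 1 (Xφ K n ε i p m x) = Xφ K n ε i q m (cmap n i p q _ 1 x) := by
  apply Subtype.ext
  by_cases hs : i + 1 ≤ asrc ε m ∧ asrc ε m ≤ p ∧ asrc ε m ≤ n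
  swap
  · have : x = 0 := Subtype.ext (XV_zero n i p _ hs x)
    subst this
    simp
  rw [cmap_coe, Xφ_coe, Xφ_coe, cmap_coe]
  by_cases ht : i + 1 ≤ atgt ε m ∧ atgt ε m ≤ q ∧ atgt ε m ≤ n
  swap
  · rw [if_neg ht, if_neg ht]
  have hmk : m ≠ k := by
    rintro rfl
    exact hc ⟨hs.2.1, ht.2.1⟩
  have hlt : m < k := by
    unfold asrc at hs
    unfold atgt at ht
    split_ifs at hs ht <;> omega
  have h1 : atgt ε m ≤ p := by unfold atgt; split_ifs <;> omega
  have h2 : asrc ε m ≤ q := by unfold asrc; split_ifs <;> omega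
  rw [if_pos ht, if_pos ht, if_pos ⟨ht.1, h1, ht.2.2⟩, if_pos ⟨hs.1, h2, hs.2.2⟩]

theorem X_hom (n : ℕ) (ε : ℕ → Bool) (i p q k : ℕ) (hi : i < k) (hkn : k < n)
    (hp : k ≤ p) (hq : k ≤ q) (hpq : p = k ∨ q = k) (hpq' : p ≠ q) :
    homNonzero (Xrep K n ε i p) (Xrep K n ε i q) ↔ ¬ (asrc ε k ≤ p ∧ atgt ε k ≤ q) := by
  constructor
  · rintro ⟨θ, m₀, hm₀⟩ hc
    apply hm₀
    exact LinearMap.ext fun x => X_hom0 n ε i p q k hi hkn hp hq hpq hpq' θ.app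
      (fun m x => LinearMap.congr_fun (θ.comm m) x) hc m₀ x
  · intro hc
    refine ⟨⟨fun m => cmap n i p q m 1, ?_⟩, k, ?_⟩
    · intro m
      exact LinearMap.ext fun x => X_hom1 n ε i p q k hp hq hpq hc m x
    · intro h
      have h' : ((cmap n i p q k 1 ⟨1, XV_mem n i p k (by omega) 1⟩ : XV K n i q k) : K) = 0 :=
        congrArg Subtype.val (LinearMap.congr_fun h _)
      rw [cmap_coe, if_pos (by omega)] at h'
      simp at h'

/-- Lemma 3.11 iv)–vi): representations sharing the left endpoint `i`. -/
theorem shared_left_endpoint (K : Type) [Field K] (n : ℕ) (ε : ℕ → Bool) (i k j : ℕ)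
    (h1 : i < k) (h2 : k < j) (h3 : j ≤ n) :
    (homNonzero (Xrep K n ε i k) (Xrep K n ε i j) ↔ ε k = false) ∧
    (homNonzero (Xrep K n ε i j) (Xrep K n ε i k) ↔ ε k = true) ∧
    extZero (Xrep K n ε i k) (Xrep K n ε i j) ∧
    extZero (Xrep K n ε i j) (Xrep K n ε i k) := by
  refine ⟨?_, ?_, X_ext n ε i k j k le_rfl h2.le (Or.inl rfl),
    X_ext n ε i j k k h2.le le_rfl (Or.inr rfl)⟩
  · rw [X_hom n ε i k j k h1 (by omega) le_rfl h2.le (Or.inl rfl) (by omega)]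
    cases h : ε k <;> simp [asrc, atgt, h] <;> omega
  · rw [X_hom n ε i j k k h1 (by omega) h2.le le_rfl (Or.inr rfl) (by omega)]
    cases h : ε k <;> simp [asrc, atgt, h] <;> omega

end ESPaper
end

section
/- Assume 0 ≤ i < k < j ≤ n. Then Hom(X_{k,j}, X_{i,j}) ≠ 0 if and only if ε_k = +; Hom(X_{i,j}, X_{k,j}) ≠ 0 if and only if ε_k = −; and Ext^1(X_{k,j}, X_{i,j}) = 0 and Ext^1(X_{i,j}, X_{k,j}) = 0. -/
namespace ESPaper

variable {K : Type} [Field K]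

/-! ### Helpers -/

def Sup (n a j m : ℕ) : Prop := a + 1 ≤ m ∧ m ≤ j ∧ m ≤ n

instance (n a j m : ℕ) : Decidable (Sup n a j m) := by unfold Sup; infer_instance

def val (K : Type) [Field K] (n : ℕ) (ε : ℕ → Bool) (a j m : ℕ) :
    (Xrep K n ε a j).V m →ₗ[K] K := (XV K n a j m).subtype

theorem val_inj {K : Type} [Field K] {n : ℕ} {ε : ℕ → Bool} {a j m : ℕ}
    {x y : (Xrep K n ε a j).V m} (h : val K n ε a j m x = val K n ε a j m y) : x = y :=
  Subtype.ext h

theorem val_not {K : Type} [Field K] {n : ℕ} {ε : ℕ → Bool} {a j m : ℕ}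
    (h : ¬ Sup n a j m) (x : (Xrep K n ε a j).V m) : val K n ε a j m x = 0 := by
  have hx : val K n ε a j m x ∈ XV K n a j m := Subtype.property _
  have hb : XV K n a j m = ⊥ := if_neg h
  rw [hb] at hx
  exact hx

/-- Element with given value. -/
def mk (K : Type) [Field K] (n : ℕ) (ε : ℕ → Bool) (a j m : ℕ) (c : K)
    (h : Sup n a j m ∨ c = 0) : (Xrep K n ε a j).V m :=
  (⟨c, by
    unfold XV
    split_ifs with h'
    · trivial
    · rcases h with h | h
      · exact absurd h h'
      · simp [h]⟩ : XV K n a j m)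

theorem val_mk {K : Type} [Field K] {n : ℕ} {ε : ℕ → Bool} {a j m : ℕ} {c : K} (h) :
    val K n ε a j m (mk K n ε a j m c h) = c := rfl

def u (K : Type) [Field K] (n : ℕ) (ε : ℕ → Bool) (a j m : ℕ) : (Xrep K n ε a j).V m :=
  mk K n ε a j m (if Sup n a j m then 1 else 0) (by split_ifs with h <;> simp [h])

theorem val_u {K : Type} [Field K] {n : ℕ} {ε : ℕ → Bool} {a j m : ℕ} :
    val K n ε a j m (u K n ε a j m) = if Sup n a j m then 1 else 0 := rfl

theorem val_smul_u {K : Type} [Field K] {n : ℕ} {ε : ℕ → Bool} {a j m : ℕ}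
    (x : (Xrep K n ε a j).V m) : val K n ε a j m x • u K n ε a j m = x := by
  apply val_inj
  rw [map_smul, val_u]
  split_ifs with h
  · simp
  · simp [val_not h x]

theorem u_zero {K : Type} [Field K] {n : ℕ} {ε : ℕ → Bool} {a j m : ℕ} (h : ¬ Sup n a j m) :
    u K n ε a j m = 0 := by
  apply val_inj
  rw [val_not h, map_zero]

theorem Xφ_val {K : Type} [Field K] {n : ℕ} {ε : ℕ → Bool} {a j m : ℕ}
    (x : XV K n a j (asrc ε m)) :
    ((Xφ K n ε a j m x : XV K n a j (atgt ε m)) : K) =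
      if Sup n a j (atgt ε m) then (x : K) else 0 := by
  by_cases h : Sup n a j (atgt ε m)
  · rw [if_pos h]
    exact congrArg Subtype.val (LinearMap.congr_fun (dif_pos h) x)
  · rw [if_neg h]
    exact congrArg Subtype.val (LinearMap.congr_fun (dif_neg h) x)

theorem val_φ {K : Type} [Field K] {n : ℕ} {ε : ℕ → Bool} {a j m : ℕ}
    (x : (Xrep K n ε a j).V (asrc ε m)) :
    val K n ε a j _ ((Xrep K n ε a j).φ m x) =
      if Sup n a j (atgt ε m) then val K n ε a j _ x else 0 := by
  exact Xφ_val x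

def arr {K : Type} [Field K] {n : ℕ} {ε : ℕ → Bool} (E : Rep K n ε) (m s t : ℕ)
    (hs : asrc ε m = s) (ht : atgt ε m = t) : E.V s →ₗ[K] E.V t := by
  subst hs ht; exact E.φ m

theorem arr_comm {K : Type} [Field K] {n : ℕ} {ε : ℕ → Bool} {A B : Rep K n ε} (f : RepHom A B)
    (m s t : ℕ) (hs : asrc ε m = s) (ht : atgt ε m = t) (x : A.V s) :
    f.app t (arr A m s t hs ht x) = arr B m s t hs ht (f.app s x) := by
  subst hs ht
  exact LinearMap.congr_fun (f.comm m) x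

theorem val_arr {K : Type} [Field K] {n : ℕ} {ε : ℕ → Bool} {a j m s t : ℕ}
    (hs : asrc ε m = s) (ht : atgt ε m = t) (x : (Xrep K n ε a j).V s) :
    val K n ε a j t (arr (Xrep K n ε a j) m s t hs ht x) =
      if Sup n a j t then val K n ε a j s x else 0 := by
  subst hs ht
  exact val_φ x

theorem arr_fam {K : Type} [Field K] {n : ℕ} {ε : ℕ → Bool} {E : Rep K n ε} (e : ∀ m, E.V m)
    {m s t : ℕ} (hs : asrc ε m = s) (ht : atgt ε m = t) (h : arr E m s t hs ht (e s) = e t) :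
    E.φ m (e (asrc ε m)) = e (atgt ε m) := by
  subst hs ht
  exact h

theorem src_t {ε : ℕ → Bool} {m : ℕ} (h : ε m = true) : asrc ε m = m := by simp [asrc, h]
theorem tgt_t {ε : ℕ → Bool} {m : ℕ} (h : ε m = true) : atgt ε m = m + 1 := by simp [atgt, h]
theorem src_f {ε : ℕ → Bool} {m : ℕ} (h : ε m = false) : asrc ε m = m + 1 := by simp [asrc, h]
theorem tgt_f {ε : ℕ → Bool} {m : ℕ} (h : ε m = false) : atgt ε m = m := by simp [atgt, h]

theorem ext_step {K : Type} [Field K] {n : ℕ} {ε : ℕ → Bool} {a b j : ℕ}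
    (hj : j ≤ n) {E : Rep K n ε}
    {f : RepHom (Xrep K n ε b j) E} {g : RepHom E (Xrep K n ε a j)} (hS : IsSES f g)
    (m : ℕ) (x : E.V m) (hx : g.app m x = u K n ε a j m) (hx0 : m ≤ a → x = 0) :
    ∃ y : E.V (m+1), g.app (m+1) y = u K n ε a j (m+1) ∧ (m + 1 ≤ a → y = 0) ∧
      (∀ h : ε m = true, a < m → arr E m m (m+1) (src_t h) (tgt_t h) x = y) ∧
      (∀ h : ε m = false, a ≤ m → m < j → arr E m (m+1) m (src_f h) (tgt_f h) y = x) := by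
  obtain ⟨hinj, hsurj, hex⟩ := hS
  by_cases hma : m < a
  · refine ⟨0, ?_, fun _ => rfl, fun h h' => by omega, fun h h' => by omega⟩
    rw [u_zero (by unfold Sup; omega), map_zero]
  by_cases hmj : j ≤ m
  · refine ⟨0, ?_, fun _ => rfl, fun h h' => ?_, fun h h' => by omega⟩
    · rw [u_zero (by unfold Sup; omega), map_zero]
    · have hmem : arr E m m (m+1) (src_t h) (tgt_t h) x ∈ LinearMap.ker (g.app (m+1)) := by
        rw [LinearMap.mem_ker]
        apply val_inj
        rw [val_not (by unfold Sup; omega), map_zero]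
      rw [← hex] at hmem
      obtain ⟨z, hz⟩ := hmem
      rw [← hz, show z = 0 from val_inj (by rw [val_not (by unfold Sup; omega), map_zero]), map_zero]
  push Not at hma hmj
  rcases Bool.eq_false_or_eq_true (ε m) with hε | hε
  · by_cases ham : a = m
    · obtain ⟨y, hy⟩ := hsurj (m+1) (u K n ε a j (m+1))
      exact ⟨y, hy, fun _ => by omega, fun h h' => by omega, fun h => by simp [hε] at h⟩
    · refine ⟨arr E m m (m+1) (src_t hε) (tgt_t hε) x, ?_, fun _ => by omega, fun _ _ => rfl,
        fun h => by simp [hε] at h⟩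
      rw [arr_comm, hx]
      apply val_inj
      rw [val_arr, val_u, val_u]
      rw [if_pos (by unfold Sup; omega), if_pos (by unfold Sup; omega),
        if_pos (by unfold Sup; omega)]
  · obtain ⟨y, hy⟩ := hsurj (m+1) (u K n ε a j (m+1))
    have hmem : arr E m (m+1) m (src_f hε) (tgt_f hε) y - x ∈ LinearMap.ker (g.app m) := by
      rw [LinearMap.mem_ker, map_sub, arr_comm, hy, hx, sub_eq_zero]
      apply val_inj
      rw [val_arr, val_u, val_u]
      rw [if_pos (by unfold Sup; omega : Sup n a j (m+1))]
    rw [← hex] at hmem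
    obtain ⟨z, hz⟩ := hmem
    have hgf : ∀ w, g.app (m+1) (f.app (m+1) w) = 0 := fun w => by
      rw [← LinearMap.mem_ker, ← hex]; exact ⟨w, rfl⟩
    let w : (Xrep K n ε b j).V (m+1) := mk K n ε b j (m+1) (val K n ε b j m z) (by
      by_cases hs : Sup n b j m
      · left; unfold Sup at *; omega
      · right; exact val_not hs z)
    have hw : arr (Xrep K n ε b j) m (m+1) m (src_f hε) (tgt_f hε) w = z := by
      apply val_inj
      rw [val_arr, val_mk]
      split_ifs with hs
      · rfl
      · rw [val_not hs]
    refine ⟨y - f.app (m+1) w, ?_, fun _ => by omega, fun h => by simp [hε] at h, fun h _ _ => ?_⟩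
    · rw [map_sub, hgf, hy, sub_zero]
    · rw [map_sub, ← arr_comm, hw, hz]; abel

theorem ext_zero (K : Type) [Field K] (n : ℕ) (ε : ℕ → Bool) (a b j : ℕ) (hj : j ≤ n) :
    extZero (Xrep K n ε a j) (Xrep K n ε b j) := by
  rintro ⟨E, f, g, hS, hns⟩
  apply hns
  choose F hF1 hF2 hF3 hF4 using @ext_step K _ n ε a b j hj E f g hS
  let e' : ∀ m, {x : E.V m // g.app m x = u K n ε a j m ∧ (m ≤ a → x = 0)} := fun m =>
    Nat.rec ⟨0, by rw [map_zero, u_zero (by simp [Sup])], fun _ => rfl⟩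
      (fun m p => ⟨F m p.1 p.2.1 p.2.2, hF1 _ _ _ _, hF2 _ _ _ _⟩) m
  let e : ∀ m, E.V m := fun m => (e' m).1
  have he1 : ∀ m, g.app m (e m) = u K n ε a j m := fun m => (e' m).2.1
  have he2 : ∀ m, m ≤ a → e m = 0 := fun m => (e' m).2.2
  have he3 : ∀ m, ∀ h : ε m = true, a < m →
      arr E m m (m+1) (src_t h) (tgt_t h) (e m) = e (m+1) :=
    fun m => hF3 m (e m) (e' m).2.1 (e' m).2.2
  have he4 : ∀ m, ∀ h : ε m = false, a ≤ m → m < j →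
      arr E m (m+1) m (src_f h) (tgt_f h) (e (m+1)) = e m :=
    fun m => hF4 m (e m) (e' m).2.1 (e' m).2.2
  have he5 : ∀ m, ¬ Sup n a j m → e m = 0 := by
    intro m hm
    by_cases hma : m ≤ a
    · exact he2 m hma
    have hmem : e m ∈ LinearMap.ker (g.app m) := by
      rw [LinearMap.mem_ker, he1, u_zero hm]
    rw [← hS.2.2] at hmem
    obtain ⟨z, hz⟩ := hmem
    rw [← hz, show z = 0 from val_inj (by
      rw [val_not (by unfold Sup at *; omega), map_zero]), map_zero]
  have key : ∀ m, Sup n a j (asrc ε m) → E.φ m (e (asrc ε m)) = e (atgt ε m) := by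
    intro m hm
    cases hε : ε m with
    | true =>
      rw [src_t hε] at hm
      exact arr_fam e (src_t hε) (tgt_t hε) (he3 m hε (by unfold Sup at hm; omega))
    | false =>
      rw [src_f hε] at hm
      unfold Sup at hm
      exact arr_fam e (src_f hε) (tgt_f hε) (he4 m hε (by omega) (by omega))
  refine ⟨⟨fun m => (val K n ε a j m).smulRight (e m), fun m => ?_⟩, fun m => ?_⟩
  · ext x
    simp only [LinearMap.comp_apply, LinearMap.smulRight_apply, map_smul]
    by_cases hs : Sup n a j (asrc ε m)
    · rw [key m hs, val_φ]
      split_ifs with ht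
      · rfl
      · rw [he5 _ ht, smul_zero, smul_zero]
    · rw [val_φ, val_not hs]; simp
  · ext x
    simp only [LinearMap.comp_apply, LinearMap.smulRight_apply, map_smul, LinearMap.id_apply]
    rw [he1, val_smul_u]

/-- A morphism vanishing at `k+1` vanishes. -/
theorem hom_aux {K : Type} [Field K] {n : ℕ} {ε : ℕ → Bool} {a b k j : ℕ}
    (ha : a ≤ k) (hb : b ≤ k) (hab : a = k ∨ b = k) (hj : j ≤ n)
    (θ : RepHom (Xrep K n ε a j) (Xrep K n ε b j))
    (h0 : val K n ε b j (k+1) (θ.app (k+1) (u K n ε a j (k+1))) = 0) (m : ℕ) : θ.app m = 0 := by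
  have hind : ∀ d, k + 1 + d ≤ j →
      val K n ε b j (k+1+d) (θ.app (k+1+d) (u K n ε a j (k+1+d))) = 0 := by
    intro d
    induction d with
    | zero => intro _; exact h0
    | succ d ih =>
      intro hd
      have ih := ih (by omega)
      have hSa : Sup n a j (k+1+d) := by unfold Sup; omega
      have hSa' : Sup n a j (k+1+d+1) := by unfold Sup; omega
      have hSb : Sup n b j (k+1+d) := by unfold Sup; omega
      have hSb' : Sup n b j (k+1+d+1) := by unfold Sup; omega
      cases hε : ε (k+1+d) with
      | true =>
        have h := congrArg (val K n ε b j _)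
          (arr_comm θ _ _ _ (src_t hε) (tgt_t hε) (u K n ε a j (k+1+d)))
        rw [val_arr, if_pos hSb', ih] at h
        refine Eq.trans ?_ h
        show val K n ε b j (k+1+d+1) (θ.app (k+1+d+1) (u K n ε a j (k+1+d+1))) = _
        congr 2
        apply val_inj
        rw [val_arr, val_u, val_u, if_pos hSa', if_pos hSa, if_pos hSa']
      | false =>
        have h := congrArg (val K n ε b j _)
          (arr_comm θ _ _ _ (src_f hε) (tgt_f hε) (u K n ε a j (k+1+d+1)))
        rw [val_arr, if_pos hSb] at h
        refine h.symm.trans ?_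
        rw [← ih]
        congr 2
        apply val_inj
        rw [val_arr, val_u, val_u, if_pos hSa', if_pos hSa]
  ext x
  rw [LinearMap.zero_apply]
  apply val_inj
  rw [map_zero]
  by_cases hSa : Sup n a j m
  · by_cases hSb : Sup n b j m
    · obtain ⟨d, rfl⟩ : ∃ d, m = k + 1 + d := ⟨m - (k+1), by unfold Sup at *; omega⟩
      rw [← val_smul_u x, map_smul, map_smul, hind d hSa.2.1, smul_zero]
    · exact val_not hSb _
  · rw [show x = 0 from val_inj (by rw [val_not hSa, map_zero]), map_zero, map_zero]

/-- The canonical map: identity on the common support. -/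
def can (K : Type) [Field K] (n : ℕ) (ε : ℕ → Bool) (a b j m : ℕ) :
    (Xrep K n ε a j).V m →ₗ[K] (Xrep K n ε b j).V m :=
  (val K n ε a j m).smulRight (u K n ε b j m)

theorem val_can {K : Type} [Field K] {n : ℕ} {ε : ℕ → Bool} {a b j m : ℕ}
    (x : (Xrep K n ε a j).V m) :
    val K n ε b j m (can K n ε a b j m x) = if Sup n b j m then val K n ε a j m x else 0 := by
  unfold can
  rw [LinearMap.smulRight_apply, map_smul, val_u]
  split_ifs <;> simp

theorem hom_nonzero {K : Type} [Field K] {n : ℕ} {ε : ℕ → Bool} {a b j : ℕ}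
    (ha : a < j) (hb : b < j) (hj : j ≤ n)
    (h : ∀ m, Sup n a j (asrc ε m) → Sup n b j (atgt ε m) →
      (Sup n a j (atgt ε m) ↔ Sup n b j (asrc ε m))) :
    homNonzero (Xrep K n ε a j) (Xrep K n ε b j) := by
  refine ⟨⟨fun m => can K n ε a b j m, fun m => ?_⟩, j, fun h0 => ?_⟩
  · ext x
    apply val_inj
    simp only [LinearMap.comp_apply]
    rw [val_can, val_φ, val_φ, val_can]
    by_cases h1 : Sup n a j (asrc ε m)
    · by_cases h2 : Sup n b j (atgt ε m)
      · simp [h2, h m h1 h2]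
      · simp [h2]
    · simp [val_not h1]
  · have := congrArg (fun l => val K n ε b j j (l (u K n ε a j j))) h0
    simp only [val_can, val_u, LinearMap.zero_apply, map_zero] at this
    rw [if_pos (by unfold Sup; omega), if_pos (by unfold Sup; omega)] at this
    exact one_ne_zero this

/-- Lemma 3.11 vii)–ix): representations sharing the right endpoint `j`. -/
theorem shared_right_endpoint (K : Type) [Field K] (n : ℕ) (ε : ℕ → Bool) (i k j : ℕ)
    (h1 : i < k) (h2 : k < j) (h3 : j ≤ n) :
    (homNonzero (Xrep K n ε k j) (Xrep K n ε i j) ↔ ε k = true) ∧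
    (homNonzero (Xrep K n ε i j) (Xrep K n ε k j) ↔ ε k = false) ∧
    extZero (Xrep K n ε k j) (Xrep K n ε i j) ∧
    extZero (Xrep K n ε i j) (Xrep K n ε k j) := by
  refine ⟨⟨fun hh => ?_, fun hε => ?_⟩, ⟨fun hh => ?_, fun hε => ?_⟩,
    ext_zero K n ε k i j h3, ext_zero K n ε i k j h3⟩
  · by_contra hc
    have hε : ε k = false := by simpa using hc
    obtain ⟨θ, m, hm⟩ := hh
    apply hm
    refine hom_aux le_rfl h1.le (Or.inl rfl) h3 θ ?_ m
    have h := congrArg (val K n ε i j _)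
      (arr_comm θ _ _ _ (src_f hε) (tgt_f hε) (u K n ε k j (k+1)))
    rw [val_arr, if_pos (by unfold Sup; omega)] at h
    rw [← h, show arr (Xrep K n ε k j) k (k+1) k (src_f hε) (tgt_f hε) (u K n ε k j (k+1)) = 0
      from val_inj (by rw [val_not (by unfold Sup; omega), map_zero]), map_zero, map_zero]
  · refine hom_nonzero h2 (h1.trans h2) h3 fun m ha hb => ?_
    by_cases hmk : m = k
    · subst hmk
      rw [src_t hε] at ha
      unfold Sup at ha; omega
    · unfold Sup asrc atgt at *
      split_ifs at * <;> omega
  · by_contra hc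
    have hε : ε k = true := by simpa using hc
    obtain ⟨θ, m, hm⟩ := hh
    apply hm
    refine hom_aux h1.le le_rfl (Or.inr rfl) h3 θ ?_ m
    have h := congrArg (val K n ε k j _)
      (arr_comm θ _ _ _ (src_t hε) (tgt_t hε) (u K n ε i j k))
    rw [val_arr, if_pos (by unfold Sup; omega),
      val_not (by unfold Sup; omega : ¬ Sup n k j k)] at h
    rw [← h]
    congr 2
    apply val_inj
    rw [val_arr, val_u, val_u, if_pos (by unfold Sup; omega), if_pos (by unfold Sup; omega),
      if_pos (by unfold Sup; omega)]
  · refine hom_nonzero (h1.trans h2) h2 h3 fun m ha hb => ?_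
    by_cases hmk : m = k
    · subst hmk
      rw [tgt_f hε] at hb
      unfold Sup at hb; omega
    · unfold Sup asrc atgt at *
      split_ifs at * <;> omega

end ESPaper
end
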